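/- arXiv:2204.10317 — 7 statements merged into one kernel-verified Lean document; each statement's English description precedes it below -/
import Mathlib

section
/- For every simplicial complex X on a finite vertex set V, v(X) = min { |A| : A ∈ X and U_X(A) is a facet of X }, where U_X(A) := A ∪ {v ∈ V∖A : A∪{v} ∈ X}. -/
open scoped Classical

/-- `F` is a facet (inclusion-maximal face) of the complex `X`. -/
def IsFacet {V : Type*} (X : Set (Finset V)) (F : Finset V) : Prop :=
  F ∈ X ∧ ∀ G ∈ X, F ⊆ G → G = F

/-- The neighbors of a face `A` in the clutter of circuits of `X`:
the vertices `w ∉ A` with `A ∪ {w} ∉ X`. -/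
noncomputable def nbrs {V : Type*} [Fintype V] [DecidableEq V]
    (X : Set (Finset V)) (A : Finset V) : Finset V :=
  Finset.univ.filter (fun w => w ∉ A ∧ insert w A ∉ X)

/-- `W` is a vertex cover of the clutter of circuits of `X`: its complement
is a face of `X` (an independent set). -/
def IsVertexCover {V : Type*} [Fintype V] [DecidableEq V]
    (X : Set (Finset V)) (W : Finset V) : Prop :=
  Finset.univ \ W ∈ X

/-- `W` is a minimal vertex cover. -/
def IsMinVertexCover {V : Type*} [Fintype V] [DecidableEq V]
    (X : Set (Finset V)) (W : Finset V) : Prop :=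
  IsVertexCover X W ∧ ∀ W' ⊂ W, ¬ IsVertexCover X W'

/-- The v-number of a simplicial complex `X`: the minimum cardinality of a
face `A ∈ X` whose neighbor set is a minimal vertex cover. -/
noncomputable def vNumber {V : Type*} [Fintype V] [DecidableEq V]
    (X : Set (Finset V)) : ℕ :=
  sInf {n : ℕ | ∃ A ∈ X, IsMinVertexCover X (nbrs X A) ∧ A.card = n}

/-- `U_X(A) = A ∪ {v ∈ V \ A : A ∪ {v} ∈ X}`. -/
noncomputable def UX {V : Type*} [Fintype V] [DecidableEq V]
    (X : Set (Finset V)) (A : Finset V) : Finset V :=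
  A ∪ Finset.univ.filter (fun v => v ∉ A ∧ insert v A ∈ X)

/-- For every simplicial complex `X` on a finite vertex set `V`,
`v(X) = min { |A| : A ∈ X and U_X(A) is a facet of X }`. -/
theorem vNumber_eq_min_card_UX_facet {V : Type*} [Fintype V] [DecidableEq V]
    (X : Set (Finset V))
    (hdown : ∀ s ∈ X, ∀ t ⊆ s, t ∈ X)
    (hvert : ∀ x : V, ({x} : Finset V) ∈ X) :
    vNumber X = sInf {n : ℕ | ∃ A ∈ X, IsFacet X (UX X A) ∧ A.card = n} := by
  have hc : ∀ A, Finset.univ \ nbrs X A = UX X A := by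
    intro A
    ext v
    simp only [nbrs, UX, Finset.mem_sdiff, Finset.mem_univ, true_and, Finset.mem_filter,
      Finset.mem_union]
    tauto
  have key : ∀ A, IsMinVertexCover X (nbrs X A) ↔ IsFacet X (UX X A) := by
    intro A
    unfold IsMinVertexCover IsFacet IsVertexCover
    rw [hc]
    refine and_congr_right fun _ => ⟨fun h G hG hs => ?_, fun h W hW hX => ?_⟩
    · by_contra hne
      refine h (Finset.univ \ G) ?_ (by simpa using hG)
      have hss : UX X A ⊂ G := hs.ssubset_of_ne (Ne.symm hne)
      rw [← hc] at hss
      obtain ⟨h1, h2⟩ := hss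
      refine ⟨fun x hx => ?_, fun h3 => h2 fun x hx => ?_⟩
      · by_contra hn
        exact (Finset.mem_sdiff.1 hx).2 (h1 (by simp [hn]))
      · refine Finset.mem_sdiff.2 ⟨Finset.mem_univ _, fun hn => ?_⟩
        exact (Finset.mem_sdiff.1 (h3 hn)).2 hx
    · have h1 := h _ hX (by
        rw [← hc]
        exact Finset.sdiff_subset_sdiff (Finset.Subset.refl _) hW.1)
      rw [← hc] at h1
      apply hW.2
      intro x hx
      by_contra hn
      have h2 : x ∈ Finset.univ \ W := by simp [hn]
      rw [h1] at h2
      exact (Finset.mem_sdiff.1 h2).2 hx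
  unfold vNumber
  simp only [key]
end

section
/- For every simplicial complex X on a finite vertex set V (admitting at least one independent set A whose neighbor set is a minimal vertex cover, equivalently admitting a free face), v(X) = λ(X), where λ(X) is the minimum cardinality of a free face of X. -/
open scoped Classical

/-- `A` is a free face of `X`: a face contained in exactly one facet. -/
def IsFreeFace {V : Type*} (X : Set (Finset V)) (A : Finset V) : Prop :=
  A ∈ X ∧ ∃! F : Finset V, IsFacet X F ∧ A ⊆ F

/-- `λ(X)`: the minimum cardinality of a free face of `X`. -/
noncomputable def lambdaNumber {V : Type*} (X : Set (Finset V)) : ℕ :=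
  sInf {n : ℕ | ∃ A : Finset V, IsFreeFace X A ∧ A.card = n}

theorem free_iff_aux {V : Type*} [Fintype V] [DecidableEq V]
    (X : Set (Finset V))
    (hdown : ∀ s ∈ X, ∀ t ⊆ s, t ∈ X) (A : Finset V) (hA : A ∈ X) :
    IsMinVertexCover X (nbrs X A) ↔ IsFreeFace X A := by
  have hU : ∀ w, w ∈ Finset.univ \ nbrs X A ↔ insert w A ∈ X := by
    intro w
    simp only [nbrs, Finset.mem_sdiff, Finset.mem_univ, true_and, Finset.mem_filter]
    by_cases hw : w ∈ A
    · simp [hw, hA]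
    · simp [hw]
  have hAU : A ⊆ Finset.univ \ nbrs X A := by
    intro w hw
    rw [hU, Finset.insert_eq_of_mem hw]
    exact hA
  have hGU : ∀ G ∈ X, A ⊆ G → G ⊆ Finset.univ \ nbrs X A := by
    intro G hG hAG w hw
    rw [hU]
    exact hdown G hG _ (Finset.insert_subset hw hAG)
  constructor
  · rintro ⟨h1, -⟩
    refine ⟨hA, Finset.univ \ nbrs X A, ⟨⟨h1, ?_⟩, hAU⟩, ?_⟩
    · intro G hG hUG
      exact Finset.Subset.antisymm (hGU G hG (hAU.trans hUG)) hUG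
    · rintro F ⟨⟨hF, hmax⟩, hAF⟩
      exact (hmax _ h1 (hGU F hF hAF)).symm
  · rintro ⟨-, F, ⟨⟨hF, hmax⟩, hAF⟩, huniq⟩
    have hUF : Finset.univ \ nbrs X A ⊆ F := by
      intro w hw
      rw [hU] at hw
      obtain ⟨M, hle, hM⟩ := (Set.toFinite X).exists_le_maximal hw
      have hMF : M = F := by
        refine huniq M ⟨⟨hM.1, fun G hG hMG => ?_⟩, (Finset.subset_insert w A).trans hle⟩
        exact Finset.Subset.antisymm (hM.2 hG hMG) hMG
      rw [← hMF]
      exact hle (Finset.mem_insert_self w A)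
    refine ⟨hdown F hF _ hUF, ?_⟩
    intro W' hW' hc
    apply hW'.2
    intro w hw
    by_contra hn
    have h2 : A ⊆ Finset.univ \ W' :=
      hAU.trans (Finset.sdiff_subset_sdiff (Finset.Subset.refl _) hW'.1)
    have h3 := hGU _ hc h2 (Finset.mem_sdiff.2 ⟨Finset.mem_univ w, hn⟩)
    exact (Finset.mem_sdiff.1 h3).2 hw

/-- For every simplicial complex `X` on a finite vertex set `V`
admitting at least one face whose neighbor set is a minimal vertex cover
(equivalently, admitting a free face), `v(X) = λ(X)`. -/
theorem vNumber_eq_lambda {V : Type*} [Fintype V] [DecidableEq V]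
    (X : Set (Finset V))
    (hdown : ∀ s ∈ X, ∀ t ⊆ s, t ∈ X)
    (hvert : ∀ x : V, ({x} : Finset V) ∈ X)
    (hex : ∃ A ∈ X, IsMinVertexCover X (nbrs X A)) :
    vNumber X = lambdaNumber X := by
  unfold vNumber lambdaNumber
  congr 1
  ext n
  constructor
  · rintro ⟨A, hA, h, hc⟩
    exact ⟨A, (free_iff_aux X hdown A hA).1 h, hc⟩
  · rintro ⟨A, h, hc⟩
    exact ⟨A, h.1, (free_iff_aux X hdown A h.1).2 h, hc⟩
end

section
/- Let X be a simplicial complex on a finite vertex set V and let A ∈ X be a face such that the link lk(X;A) is a simplex (i.e., the union of all faces of lk(X;A) is itself a face of lk(X;A)). Then U_X(A) := A ∪ {v ∈ V∖A : A∪{v} ∈ X} is a facet of X. -/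
open scoped Classical

/-- The link of a face `A` in `X`. -/
def link {V : Type*} [DecidableEq V] (X : Set (Finset V)) (A : Finset V) :
    Set (Finset V) :=
  {T : Finset V | T ∈ X ∧ A ∩ T = ∅ ∧ T ∪ A ∈ X}

/-- A family `Y` of finite sets is a simplex if the union of all its members
is itself a member. -/
def IsSimplex {V : Type*} [Fintype V] (Y : Set (Finset V)) : Prop :=
  Finset.univ.filter (fun v => ∃ T ∈ Y, v ∈ T) ∈ Y

/-- If `X` is a simplicial complex on a finite vertex set `V`
and `A ∈ X` is a face whose link is a simplex, then `U_X(A)` is a facet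
of `X`. -/
theorem UX_isFacet_of_link_simplex {V : Type*} [Fintype V] [DecidableEq V]
    (X : Set (Finset V))
    (hdown : ∀ s ∈ X, ∀ t ⊆ s, t ∈ X)
    (hvert : ∀ x : V, ({x} : Finset V) ∈ X)
    (A : Finset V) (hA : A ∈ X)
    (hlink : IsSimplex (link X A)) :
    IsFacet X (UX X A) := by
  have hmem : ∀ v, v ∈ UX X A ↔ v ∈ A ∨ (v ∉ A ∧ insert v A ∈ X) := by
    intro v
    simp [UX]
  constructor
  · refine hdown _ hlink.2.2 _ ?_
    intro v hv
    rcases (hmem v).1 hv with h | ⟨h, h'⟩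
    · exact Finset.mem_union_right _ h
    · apply Finset.mem_union_left
      simp only [Finset.mem_filter, Finset.mem_univ, true_and]
      refine ⟨{v}, ⟨hvert v, ?_, ?_⟩, Finset.mem_singleton_self v⟩
      · ext x
        simp only [Finset.mem_inter, Finset.mem_singleton, Finset.notMem_empty, iff_false]
        rintro ⟨hx, rfl⟩
        exact h hx
      · rwa [← Finset.insert_eq]
  · intro G hG hsub
    refine Finset.Subset.antisymm ?_ hsub
    intro v hv
    rw [hmem]
    by_cases h : v ∈ A
    · exact Or.inl h
    · refine Or.inr ⟨h, hdown G hG _ ?_⟩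
      exact Finset.insert_subset hv (fun a ha => hsub ((hmem a).2 (Or.inl ha)))
end

section
/- For every simplicial complex X on a finite vertex set V, v(X) ≤ β(X), where β(X) is the maximum cardinality of a face A that is minimal under inclusion with the property that lk(X;A) is a simplex. -/
open scoped Classical

/-- `β(X)`: the maximum cardinality of a face `A` which is minimal (under
inclusion) with the property that `lk(X;A)` is a simplex. -/
noncomputable def betaNumber {V : Type*} [Fintype V] [DecidableEq V]
    (X : Set (Finset V)) : ℕ :=
  sSup {n : ℕ | ∃ A : Finset V,
    (A ∈ X ∧ IsSimplex (link X A) ∧ ∀ B ⊂ A, ¬ IsSimplex (link X B)) ∧ A.card = n}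

/-- For every simplicial complex `X` on a finite vertex set `V`,
`v(X) ≤ β(X)`. -/
theorem vNumber_le_betaNumber {V : Type*} [Fintype V] [DecidableEq V]
    (X : Set (Finset V))
    (hdown : ∀ s ∈ X, ∀ t ⊆ s, t ∈ X)
    (hvert : ∀ x : V, ({x} : Finset V) ∈ X) :
    vNumber X ≤ betaNumber X := by
  by_cases hX : X.Nonempty
  · obtain ⟨F, hF⟩ := (Set.toFinite X).exists_maximal hX
    have hFs : IsSimplex (link X F) := by
      have key : ∀ T ∈ link X F, T = ∅ := by
        rintro T ⟨_, hd, hU⟩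
        have h1 : T ∪ F ⊆ F := hF.2 hU Finset.subset_union_right
        have h2 : T ⊆ F := Finset.subset_union_left.trans h1
        rwa [Finset.inter_eq_right.mpr h2] at hd
      have h0 : (∅ : Finset V) ∈ link X F :=
        ⟨hdown F hF.1 _ (Finset.empty_subset _), by simp, by simpa using hF.1⟩
      unfold IsSimplex
      convert h0
      ext v
      simp only [Finset.mem_filter, Finset.mem_univ, true_and, Finset.notMem_empty, iff_false]
      rintro ⟨T, hT, hv⟩
      rw [key T hT] at hv
      simp at hv
    obtain ⟨A, hA⟩ := (Set.toFinite {A | A ∈ X ∧ IsSimplex (link X A)}).exists_minimal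
      ⟨F, hF.1, hFs⟩
    have hAX : A ∈ X := hA.1.1
    have hAs : IsSimplex (link X A) := hA.1.2
    have hmin : ∀ B ⊂ A, ¬ IsSimplex (link X B) := fun B hB hs =>
      hB.2 (hA.2 ⟨hdown A hAX B hB.1, hs⟩ hB.1)
    have hv : vNumber X ≤ A.card := by
      apply Nat.sInf_le
      refine ⟨A, hAX, ⟨?_, ?_⟩, rfl⟩
      · refine hdown _ hAs.2.2 _ ?_
        intro w hw
        simp only [nbrs, Finset.mem_sdiff, Finset.mem_filter, Finset.mem_univ, true_and] at hw
        by_cases hwA : w ∈ A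
        · exact Finset.mem_union_right _ hwA
        · have hi : insert w A ∈ X := by
            by_contra h
            exact hw ⟨hwA, h⟩
          apply Finset.mem_union_left
          simp only [Finset.mem_filter, Finset.mem_univ, true_and]
          refine ⟨{w}, ?_, by simp⟩
          exact ⟨hvert w, by simp [hwA], by simpa [← Finset.insert_eq] using hi⟩
      · intro W' hW hc
        obtain ⟨w, hw, hw'⟩ := Finset.exists_of_ssubset hW
        have hn := (Finset.mem_filter.mp hw).2
        apply hn.2
        refine hdown _ hc _ ?_
        intro x hx
        rw [Finset.mem_sdiff]
        refine ⟨Finset.mem_univ _, fun hxW => ?_⟩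
        rcases Finset.mem_insert.mp hx with rfl | hxA
        · exact hw' hxW
        · exact (Finset.mem_filter.mp (hW.1 hxW)).2.1 hxA
    refine hv.trans (le_csSup ⟨Fintype.card V, ?_⟩ ⟨A, ⟨hAX, hAs, hmin⟩, rfl⟩)
    rintro n ⟨B, _, rfl⟩
    exact Finset.card_le_univ B
  · have : vNumber X = 0 := by
      rw [vNumber, Nat.sInf_eq_zero]
      right
      ext n
      simp only [Set.mem_ofPred_eq, Set.mem_empty_iff_false, iff_false]
      rintro ⟨A, hA, _⟩
      exact hX ⟨A, hA⟩
    omega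
end

section
/- For every simplicial complex X on a finite vertex set V, β(X) equals the maximum cardinality of a minimal free face of X, where a free face is minimal if none of its proper subsets is a free face of X. -/
open scoped Classical

theorem exists_facet_aux {V : Type*} [Fintype V] (X : Set (Finset V)) {A : Finset V}
    (hA : A ∈ X) : ∃ F, IsFacet X F ∧ A ⊆ F := by
  obtain ⟨F, hAF, hF⟩ := (Set.toFinite X).exists_le_maximal hA
  exact ⟨F, ⟨hF.1, fun G hG h => le_antisymm (hF.2 hG h) h⟩, hAF⟩

theorem simplex_iff_free_aux {V : Type*} [Fintype V] [DecidableEq V]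
    (X : Set (Finset V)) (hdown : ∀ s ∈ X, ∀ t ⊆ s, t ∈ X) {A : Finset V} (hA : A ∈ X) :
    IsSimplex (link X A) ↔ IsFreeFace X A := by
  obtain ⟨U, hUs, memU⟩ : ∃ U : Finset V, (IsSimplex (link X A) ↔ U ∈ link X A) ∧
      ∀ v, v ∈ U ↔ ∃ T ∈ link X A, v ∈ T :=
    ⟨_, Iff.rfl, fun v => (@Finset.mem_filter _ _ (_) _ _).trans (by simp)⟩
  rw [hUs]
  constructor
  · intro h
    have hUA : U ∪ A ∈ X := h.2.2
    have key : ∀ G ∈ X, A ⊆ G → G ⊆ U ∪ A := by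
      intro G hG hAG v hv
      by_cases hvA : v ∈ A
      · exact Finset.mem_union_right _ hvA
      · refine Finset.mem_union_left _ ((memU v).2 ⟨G \ A, ⟨hdown G hG _ Finset.sdiff_subset, ?_, ?_⟩, ?_⟩)
        · exact Finset.inter_sdiff_self A G
        · rw [Finset.sdiff_union_of_subset hAG]; exact hG
        · exact Finset.mem_sdiff.2 ⟨hv, hvA⟩
    refine ⟨hA, U ∪ A, ⟨⟨hUA, ?_⟩, Finset.subset_union_right⟩, ?_⟩
    · intro G hG hs
      exact Finset.Subset.antisymm (key G hG (Finset.subset_union_right.trans hs)) hs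
    · rintro G ⟨hG, hAG⟩
      exact (hG.2 _ hUA (key G hG.1 hAG)).symm
  · rintro ⟨-, F, ⟨hF, hAF⟩, huniq⟩
    have hUF : U ⊆ F := by
      intro v hv
      obtain ⟨T, hT, hvT⟩ := (memU v).1 hv
      obtain ⟨G, hG, hTG⟩ := exists_facet_aux X hT.2.2
      have := huniq G ⟨hG, Finset.subset_union_right.trans hTG⟩
      exact this ▸ hTG (Finset.mem_union_left _ hvT)
    refine ⟨hdown F hF.1 _ hUF, ?_, hdown F hF.1 _ (Finset.union_subset hUF hAF)⟩
    rw [Finset.eq_empty_iff_forall_notMem]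
    intro v hv
    obtain ⟨h1, h2⟩ := Finset.mem_inter.1 hv
    obtain ⟨T, hT, hvT⟩ := (memU v).1 h2
    have : v ∈ A ∩ T := Finset.mem_inter.2 ⟨h1, hvT⟩
    rw [hT.2.1] at this
    exact Finset.notMem_empty v this

/-- For every simplicial complex `X` on a finite vertex set `V`,
`β(X)` equals the maximum cardinality of a minimal free face of `X` (a free
face none of whose proper subsets is a free face). -/
theorem betaNumber_eq_max_minimal_free_face {V : Type*} [Fintype V] [DecidableEq V]
    (X : Set (Finset V))
    (hdown : ∀ s ∈ X, ∀ t ⊆ s, t ∈ X)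
    (hvert : ∀ x : V, ({x} : Finset V) ∈ X) :
    betaNumber X =
      sSup {n : ℕ | ∃ A : Finset V,
        (IsFreeFace X A ∧ ∀ B ⊂ A, ¬ IsFreeFace X B) ∧ A.card = n} := by
  unfold betaNumber
  congr 1
  ext n
  refine exists_congr fun A => and_congr_left fun _ => ?_
  constructor
  · rintro ⟨hA, h, hm⟩
    exact ⟨(simplex_iff_free_aux X hdown hA).1 h, fun B hB hf =>
      hm B hB ((simplex_iff_free_aux X hdown (hdown A hA B hB.1)).2 hf)⟩
  · rintro ⟨h, hm⟩
    exact ⟨h.1, (simplex_iff_free_aux X hdown h.1).2 h, fun B hB hf =>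
      hm B hB ((simplex_iff_free_aux X hdown (hdown A h.1 B hB.1)).1 hf)⟩
end

section
/- For every finite simple graph G (with at least one edge), β_ve(G) = β(Ind(G)), where Ind(G) is the independence complex of G and β(X) is the maximum cardinality of a face A of X that is minimal under inclusion with the property that lk(X;A) is a simplex. -/
open scoped Classical

/-- `S` is an independent set of the graph `G`. -/
def IsIndepSet {V : Type*} (G : SimpleGraph V) (S : Set V) : Prop :=
  ∀ x ∈ S, ∀ y ∈ S, ¬ G.Adj x y

/-- `u` vertex-wise dominates the edge `xy`: `u ∈ N_G[x] ∪ N_G[y]`. -/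
def VeDominates {V : Type*} (G : SimpleGraph V) (u x y : V) : Prop :=
  u = x ∨ u = y ∨ G.Adj u x ∨ G.Adj u y

/-- `S` is a vertex-wise dominating set of `G`. -/
def IsVeDomSet {V : Type*} (G : SimpleGraph V) (S : Set V) : Prop :=
  ∀ x y : V, G.Adj x y → ∃ s ∈ S, VeDominates G s x y

/-- The upper independent vertex-wise domination number `β_ve(G)`. -/
noncomputable def betaVe {V : Type*} [Fintype V] [DecidableEq V]
    (G : SimpleGraph V) : ℕ :=
  sSup {n : ℕ | ∃ S : Finset V,
    IsIndepSet G ↑S ∧ IsVeDomSet G ↑S ∧ (∀ T ⊂ S, ¬ IsVeDomSet G ↑T) ∧ S.card = n}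

/-- The independence complex of `G`: the faces are the (finite) independent
sets of `G`. -/
def indComplex {V : Type*} (G : SimpleGraph V) : Set (Finset V) :=
  {A : Finset V | IsIndepSet G ↑A}

theorem isSimplex_link_iff {V : Type*} [Fintype V] [DecidableEq V]
    (G : SimpleGraph V) (A : Finset V) (hA : IsIndepSet G ↑A) :
    IsSimplex (link (indComplex G) A) ↔ IsVeDomSet G ↑A := by
  have hM : ∀ v, (∃ T ∈ link (indComplex G) A, v ∈ T) ↔ (v ∉ A ∧ ∀ a ∈ A, ¬ G.Adj a v) := by
    intro v
    constructor
    · rintro ⟨T, ⟨_, h2, h3⟩, hv⟩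
      refine ⟨fun hvA => ?_, fun a ha => ?_⟩
      · have : v ∈ A ∩ T := Finset.mem_inter.2 ⟨hvA, hv⟩
        rw [h2] at this
        simp at this
      · exact h3 a (by simp [ha]) v (by simp [hv])
    · rintro ⟨h1, h2⟩
      refine ⟨{v}, ⟨?_, ?_, ?_⟩, by simp⟩
      · intro x hx y hy
        simp at hx hy
        subst hx; subst hy
        exact G.loopless.irrefl _
      · ext x
        simp
        rintro hx rfl
        exact h1 hx
      · intro x hx y hy
        simp at hx hy
        rcases hx with rfl | hx <;> rcases hy with rfl | hy
        · exact G.loopless.irrefl _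
        · exact fun h => h2 y hy h.symm
        · exact h2 x hx
        · exact hA x hx y hy
  unfold IsSimplex
  simp only [hM]
  constructor
  · rintro ⟨h1, _, _⟩ x y hxy
    by_contra hc
    push Not at hc
    refine h1 x ?_ y ?_ hxy
    · simp
      exact ⟨fun hx => hc x hx (Or.inl rfl), fun a ha h => hc a ha (Or.inr (Or.inr (Or.inl h)))⟩
    · simp
      exact ⟨fun hx => hc y hx (Or.inr (Or.inl rfl)),
        fun a ha h => hc a ha (Or.inr (Or.inr (Or.inr h)))⟩
  · intro h
    have key : ∀ x y, x ∉ A → (∀ a ∈ A, ¬ G.Adj a x) → y ∉ A → (∀ a ∈ A, ¬ G.Adj a y) →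
        ¬ G.Adj x y := by
      intro x y hx hx' hy hy' hxy
      obtain ⟨s, hs, rfl | rfl | h | h⟩ := h x y hxy
      · exact hx hs
      · exact hy hs
      · exact hx' s hs h
      · exact hy' s hs h
    refine ⟨?_, ?_, ?_⟩
    · intro x hx y hy
      simp at hx hy
      exact key x y hx.1 hx.2 hy.1 hy.2
    · ext x
      simp
      intro hx hx'
      exact absurd hx hx'
    · intro x hx y hy
      simp at hx hy
      rcases hx with hx | hx <;> rcases hy with hy | hy
      · exact key x y hx.1 hx.2 hy.1 hy.2
      · exact fun h => hx.2 y hy h.symm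
      · exact hy.2 x hx
      · exact hA x hx y hy

/-- For every finite simple graph `G` with at least one edge,
`β_ve(G) = β(Ind(G))`. -/
theorem betaVe_eq_betaNumber_indComplex {V : Type*} [Fintype V] [DecidableEq V]
    (G : SimpleGraph V) (hedge : ∃ x y : V, G.Adj x y) :
    betaVe G = betaNumber (indComplex G) := by
  unfold betaVe betaNumber
  congr 1
  ext n
  simp only [Set.mem_setOf_eq]
  refine exists_congr fun A => ?_
  constructor
  · rintro ⟨h1, h2, h3, h4⟩
    refine ⟨⟨h1, (isSimplex_link_iff G A h1).2 h2, fun B hB hs => h3 B hB ?_⟩, h4⟩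
    exact (isSimplex_link_iff G B (fun x hx y hy => h1 x (hB.1 hx) y (hB.1 hy))).1 hs
  · rintro ⟨⟨h1, h2, h3⟩, h4⟩
    refine ⟨h1, (isSimplex_link_iff G A h1).1 h2, fun B hB hs => h3 B hB ?_, h4⟩
    exact (isSimplex_link_iff G B (fun x hx y hy => h1 x (hB.1 hx) y (hB.1 hy))).2 hs
end

section
/- Let X be a nonvoid simplicial complex on a finite vertex set V and let k ≥ 1. If X is k-collapsible, then X has a free face of cardinality at most k; consequently v(X) ≤ k, i.e., v(X) ≤ col(X). -/
open scoped Classical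

/-- `X` is `k`-collapsible: `X` can be reduced to the void complex by
repeatedly removing a free face of cardinality at most `k` (removing a free
face `σ` deletes all the faces containing `σ`). -/
inductive KCollapsible {V : Type*} (k : ℕ) : Set (Finset V) → Prop
  | void : KCollapsible k (∅ : Set (Finset V))
  | step (X : Set (Finset V)) (σ : Finset V)
      (hfree : IsFreeFace X σ) (hcard : σ.card ≤ k)
      (hrec : KCollapsible k {τ ∈ X | ¬ σ ⊆ τ}) : KCollapsible k X

/-- If `X` is a nonvoid simplicial complex on a finite vertex
set `V` and `k ≥ 1` is such that `X` is `k`-collapsible, then `X` has a free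
face of cardinality at most `k`, and consequently `v(X) ≤ k`
(i.e. `v(X) ≤ col(X)`). -/
theorem vNumber_le_of_kCollapsible {V : Type*} [Fintype V] [DecidableEq V]
    (X : Set (Finset V))
    (hdown : ∀ s ∈ X, ∀ t ⊆ s, t ∈ X)
    (hvert : ∀ x : V, ({x} : Finset V) ∈ X)
    (hne : X.Nonempty) (k : ℕ) (hk : 1 ≤ k)
    (hcol : KCollapsible k X) :
    (∃ σ : Finset V, IsFreeFace X σ ∧ σ.card ≤ k) ∧ vNumber X ≤ k := by
  have hσ : ∃ σ : Finset V, IsFreeFace X σ ∧ σ.card ≤ k := by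
    cases hcol with
    | void => exact absurd hne Set.not_nonempty_empty
    | step _ σ hfree hcard hrec => exact ⟨σ, hfree, hcard⟩
  refine ⟨hσ, ?_⟩
  obtain ⟨σ, ⟨hσX, F, ⟨hF, hσF⟩, huniq⟩, hcard⟩ := hσ
  have hext : ∀ s ∈ X, ∃ G, IsFacet X G ∧ s ⊆ G := by
    intro s hs
    obtain ⟨G, hsG, hG⟩ := (Set.toFinite X).exists_le_maximal hs
    exact ⟨G, ⟨hG.1, fun H hH hGH => Finset.Subset.antisymm (hG.2 hH hGH) hGH⟩, hsG⟩
  have hcompl : Finset.univ \ nbrs X σ = F := by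
    ext w
    simp only [nbrs, Finset.mem_sdiff, Finset.mem_univ, true_and, Finset.mem_filter]
    constructor
    · intro h
      by_cases hw : w ∈ σ
      · exact hσF hw
      · have hi : insert w σ ∈ X := by
          by_contra hc
          exact h ⟨hw, hc⟩
        obtain ⟨G, hG, hsG⟩ := hext _ hi
        have : G = F := huniq G ⟨hG, (Finset.subset_insert w σ).trans hsG⟩
        exact this ▸ hsG (Finset.mem_insert_self w σ)
    · rintro hw ⟨_, h2⟩
      exact h2 (hdown F hF.1 _ (Finset.insert_subset hw hσF))
  refine le_trans (Nat.sInf_le ⟨σ, hσX, ⟨?_, ?_⟩, rfl⟩) hcard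
  · unfold IsVertexCover
    rw [hcompl]
    exact hF.1
  · intro W' hW' hc
    unfold IsVertexCover at hc
    have h1 : F ⊆ Finset.univ \ W' := by
      rw [← hcompl]
      exact Finset.sdiff_subset_sdiff (Finset.Subset.refl _) hW'.1
    have h2 := hF.2 _ hc h1
    apply hW'.2
    intro w hw
    by_contra hn
    have : w ∈ F := by
      rw [← h2]
      simp [hn]
    rw [← hcompl] at this
    exact (Finset.mem_sdiff.1 this).2 hw
end
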